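/- arXiv:2205.13356 — 3 statements merged into one kernel-verified Lean document; each statement's English description precedes it below -/
import Mathlib

section
/- Let K be a pretriangulated category and let L be a thick subcategory of K. Then L is a compact element of the complete lattice of thick subcategories — i.e. for every family {M_λ} of thick subcategories with L ⊆ thick(⋃_λ M_λ) there exist finitely many indices λ_1, …, λ_n with L ⊆ thick(M_{λ_1} ∪ ⋯ ∪ M_{λ_n}) — if and only if there exists an object k ∈ K with L = thick({k}). -/
/-!
A union of a directed family of thick subcategories is thick (`IsThick.iUnion_of_directed`), so an
object of `thick(⋃ M_λ)` already lies in `thick(M_{λ₁} ∪ ⋯ ∪ M_{λₙ})` for finitely many indices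
(`thickClosure_iUnion_subset`). Applied to a generator `k`, this shows that `thick({k})` is compact.
Conversely, `L` is the join of the subcategories `thick({l})` with `l ∈ L`; if `L` is compact,
finitely many of these suffice, and the direct sum of the corresponding objects lies in `L` and
generates each of them as a retract (`exists_mem_forall_mem_thickClosure`), hence generates `L`.
-/

open CategoryTheory Limits Pretriangulated

universe w v u

variable {C : Type u} [Category.{v} C] [HasZeroObject C] [HasShift C ℤ] [Preadditive C]
  [∀ n : ℤ, (shiftFunctor C n).Additive] [Pretriangulated C]

/-- A thick subcategory of a pretriangulated category, viewed as a class of objects: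
it contains the zero objects and is closed under isomorphisms, all shifts, cones
(for every distinguished triangle `X → Y → Z → X⟦1⟧`, if `X` and `Y` lie in the
subcategory then so does `Z`), and direct summands (retracts). -/
structure IsThick (S : Set C) : Prop where
  zero : ∀ X : C, IsZero X → X ∈ S
  mem_of_iso : ∀ {X Y : C}, (X ≅ Y) → X ∈ S → Y ∈ S
  shift : ∀ (X : C) (n : ℤ), X ∈ S → (X⟦n⟧ : C) ∈ S
  cone : ∀ T, (T ∈ distTriang C) → T.obj₁ ∈ S → T.obj₂ ∈ S → T.obj₃ ∈ S
  retract : ∀ (X Y : C) (s : Y ⟶ X) (r : X ⟶ Y), s ≫ r = 𝟙 Y → X ∈ S → Y ∈ S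

/-- `thickClosure A` is the smallest thick subcategory containing `A`, i.e. the
intersection of all thick subcategories containing `A`. -/
def thickClosure (A : Set C) : Set C := ⋂₀ {S : Set C | IsThick S ∧ A ⊆ S}

namespace IsThick

/-- A thick subcategory is closed under binary biproducts: `X ⊞ Y` is the cone of the zero
map `Y⟦-1⟧ ⟶ X`. -/
lemma biprod_mem {S : Set C} (hS : IsThick S) {X Y : C} (hX : X ∈ S) (hY : Y ∈ S) :
    (X ⊞ Y : C) ∈ S :=
  hS.cone _ (inv_rot_of_distTriang _ (binaryBiproductTriangle_distinguished X Y))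
    (hS.shift Y (-1) hY) hX

lemma sInter {F : Set (Set C)} (hF : ∀ S ∈ F, IsThick S) : IsThick (⋂₀ F) where
  zero X hX S hS := (hF S hS).zero X hX
  mem_of_iso e hX S hS := (hF S hS).mem_of_iso e (hX S hS)
  shift X n hX S hS := (hF S hS).shift X n (hX S hS)
  cone T hT h₁ h₂ S hS := (hF S hS).cone T hT (h₁ S hS) (h₂ S hS)
  retract X Y s r hsr hX S hS := (hF S hS).retract X Y s r hsr (hX S hS)

/-- The union of a directed nonempty family of thick subcategories is thick, because each
closure condition involves at most two members of the subcategory. -/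
lemma iUnion_of_directed {ι : Type*} [Nonempty ι] {M : ι → Set C} (hM : ∀ i, IsThick (M i))
    (hd : Directed (· ⊆ ·) M) : IsThick (⋃ i, M i) where
  zero X hX := Set.mem_iUnion.2 ⟨Classical.arbitrary ι, (hM _).zero X hX⟩
  mem_of_iso e hX := by
    obtain ⟨i, hi⟩ := Set.mem_iUnion.1 hX
    exact Set.mem_iUnion.2 ⟨i, (hM i).mem_of_iso e hi⟩
  shift X n hX := by
    obtain ⟨i, hi⟩ := Set.mem_iUnion.1 hX
    exact Set.mem_iUnion.2 ⟨i, (hM i).shift X n hi⟩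
  cone T hT h₁ h₂ := by
    obtain ⟨i, hi⟩ := Set.mem_iUnion.1 h₁
    obtain ⟨j, hj⟩ := Set.mem_iUnion.1 h₂
    obtain ⟨k, hik, hjk⟩ := hd i j
    exact Set.mem_iUnion.2 ⟨k, (hM k).cone T hT (hik hi) (hjk hj)⟩
  retract X Y s r hsr hX := by
    obtain ⟨i, hi⟩ := Set.mem_iUnion.1 hX
    exact Set.mem_iUnion.2 ⟨i, (hM i).retract X Y s r hsr hi⟩

end IsThick

lemma isThick_thickClosure (A : Set C) : IsThick (thickClosure A) :=
  IsThick.sInter fun _ hS => hS.1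

lemma subset_thickClosure (A : Set C) : A ⊆ thickClosure A :=
  fun _ hX _ hS => hS.2 hX

lemma thickClosure_subset {A S : Set C} (hS : IsThick S) (h : A ⊆ S) : thickClosure A ⊆ S :=
  fun _ hX => hX S ⟨hS, h⟩

lemma thickClosure_mono {A B : Set C} (h : A ⊆ B) : thickClosure A ⊆ thickClosure B :=
  thickClosure_subset (isThick_thickClosure B) (h.trans (subset_thickClosure B))

/-- The closure `thickClosure` is finitary: each object of the join of a family already lies in
the join of a finite subfamily. -/
lemma thickClosure_iUnion_subset {ι : Type*} (M : ι → Set C) :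
    thickClosure (⋃ i, M i) ⊆ ⋃ t : Finset ι, thickClosure (⋃ i ∈ t, M i) := by
  classical
  refine thickClosure_subset
    (IsThick.iUnion_of_directed (fun t => isThick_thickClosure _) fun s t =>
      ⟨s ∪ t, thickClosure_mono (Set.biUnion_subset_biUnion_left fun _ h =>
          Finset.mem_union_left t h),
        thickClosure_mono (Set.biUnion_subset_biUnion_left fun _ h =>
          Finset.mem_union_right s h)⟩) ?_
  intro X hX
  obtain ⟨i, hi⟩ := Set.mem_iUnion.1 hX
  exact Set.mem_iUnion.2 ⟨{i}, subset_thickClosure _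
    (Set.mem_biUnion (Finset.mem_coe.2 (Finset.mem_singleton_self i)) hi)⟩

/-- Finitely many objects of a thick subcategory `L` are generated by a single object of `L`,
namely their direct sum. -/
lemma exists_mem_forall_mem_thickClosure {L : Set C} (hL : IsThick L) (t : Finset L) :
    ∃ k ∈ L, ∀ l ∈ t, (l : C) ∈ thickClosure {k} := by
  classical
  induction t using Finset.induction_on with
  | empty => exact ⟨_, hL.zero _ (isZero_zero C), by simp⟩
  | insert a t _ ih =>
    obtain ⟨k, hk, h⟩ := ih
    have hT := isThick_thickClosure {((a : C) ⊞ k : C)}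
    have hmem := subset_thickClosure {((a : C) ⊞ k : C)} rfl
    refine ⟨(a : C) ⊞ k, hL.biprod_mem a.2 hk, fun l hl => ?_⟩
    rcases Finset.mem_insert.1 hl with rfl | hl
    · exact hT.retract _ _ biprod.inl biprod.fst biprod.inl_fst hmem
    · refine thickClosure_subset hT (Set.singleton_subset_iff.2 ?_) (h l hl)
      exact hT.retract _ _ biprod.inr biprod.snd biprod.inr_snd hmem

/-- A thick subcategory `L` is a compact element of the complete lattice of thick
subcategories — i.e. whenever `L ⊆ thick(⋃_λ M_λ)` for a family of thick subcategories
there are finitely many indices `λ₁, …, λₙ` with `L ⊆ thick(M_{λ₁} ∪ ⋯ ∪ M_{λₙ})` —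
if and only if `L = thick({k})` for some object `k`. -/
theorem isCompactElement_iff_exists_generator
    (L : Set C) (hL : IsThick L) :
    (∀ (Λ : Type u) (M : Λ → Set C), (∀ l, IsThick (M l)) →
        L ⊆ thickClosure (⋃ l, M l) →
        ∃ t : Finset Λ, L ⊆ thickClosure (⋃ l ∈ t, M l)) ↔
      ∃ k : C, L = thickClosure {k} := by
  constructor
  · intro H
    -- `L` is the join of the thick subcategories generated by its individual objects.
    obtain ⟨t, ht⟩ := H L (fun l => thickClosure {(l : C)}) (fun _ => isThick_thickClosure _)
      fun X hX => subset_thickClosure _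
        (Set.mem_iUnion.2 ⟨⟨X, hX⟩, subset_thickClosure _ rfl⟩)
    obtain ⟨k, hk, h⟩ := exists_mem_forall_mem_thickClosure hL t
    refine ⟨k, Set.Subset.antisymm (ht.trans ?_)
      (thickClosure_subset hL (Set.singleton_subset_iff.2 hk))⟩
    exact thickClosure_subset (isThick_thickClosure _) (Set.iUnion₂_subset fun l hl =>
      thickClosure_subset (isThick_thickClosure _) (Set.singleton_subset_iff.2 (h l hl)))
  · rintro ⟨k, rfl⟩ Λ M - hM
    obtain ⟨t, ht⟩ := Set.mem_iUnion.1
      (thickClosure_iUnion_subset M (hM (subset_thickClosure {k} rfl)))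
    exact ⟨t, thickClosure_subset (isThick_thickClosure _) (Set.singleton_subset_iff.2 ht)⟩
end

section
/- Let K be an essentially small pretriangulated category such that Thick(K) is distributive (for all thick subcategories A, B, C: A ∩ thick(B ∪ C) = thick((A ∩ B) ∪ (A ∩ C))). Then Thick(K) has enough points: for all thick subcategories M, N of K with N ⊄ M there exists a meet-prime thick subcategory P with M ⊆ P and N ⊄ P. -/
/-!
The class `N` contains an object `x` outside `M`. The conditions defining a thick subcategory
involve only finitely many objects at a time, so thick subcategories are stable under unions of
nonempty chains (`IsThick.sUnion`), and Zorn's lemma yields a thick `P` that is maximal among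
those containing `M` and avoiding `x`. Distributivity makes `P` meet-prime: if `A ∩ B ⊆ P` but
neither `A` nor `B` lies in `P`, then by maximality `x` belongs to both `thick(P ∪ A)` and
`thick(P ∪ B)`, whereas distributivity forces the intersection of these two classes into `P`
(`thickClosure_inter_subset`).
-/

open CategoryTheory Limits Pretriangulated

universe w v u

variable {C : Type u} [Category.{v} C] [HasZeroObject C] [HasShift C ℤ] [Preadditive C]
  [∀ n : ℤ, (shiftFunctor C n).Additive] [Pretriangulated C]

lemma isThick_thickClosure_s7 (A : Set C) : IsThick (thickClosure A) where
  zero X hX _ hS := hS.1.zero X hX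
  mem_of_iso e h S hS := hS.1.mem_of_iso e (h S hS)
  shift X n h S hS := hS.1.shift X n (h S hS)
  cone T hT h₁ h₂ S hS := hS.1.cone T hT (h₁ S hS) (h₂ S hS)
  retract X Y s r hsr h S hS := hS.1.retract X Y s r hsr (h S hS)

/-- Only closure under cones has two hypotheses; in a chain both objects lie in a common
member. -/
lemma IsThick.sUnion {c : Set (Set C)} (hc : IsChain (· ⊆ ·) c) (hne : c.Nonempty)
    (h : ∀ S ∈ c, IsThick S) : IsThick (⋃₀ c) where
  zero X hX := by
    obtain ⟨S, hS⟩ := hne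
    exact ⟨S, hS, (h S hS).zero X hX⟩
  mem_of_iso := by
    rintro X Y e ⟨S, hS, hX⟩
    exact ⟨S, hS, (h S hS).mem_of_iso e hX⟩
  shift := by
    rintro X n ⟨S, hS, hX⟩
    exact ⟨S, hS, (h S hS).shift X n hX⟩
  cone := by
    rintro T hT ⟨S, hS, h₁⟩ ⟨S', hS', h₂⟩
    rcases hc.total hS hS' with hle | hle
    · exact ⟨S', hS', (h S' hS').cone T hT (hle h₁) h₂⟩
    · exact ⟨S, hS, (h S hS).cone T hT h₁ (hle h₂)⟩
  retract := by
    rintro X Y s r hsr ⟨S, hS, hX⟩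
    exact ⟨S, hS, (h S hS).retract X Y s r hsr hX⟩

/-- In a distributive lattice, `(P ∨ A) ∧ (P ∨ B) ≤ P` as soon as `A ∧ B ≤ P`. -/
lemma thickClosure_inter_subset
    (hdist : ∀ A B C' : Set C, IsThick A → IsThick B → IsThick C' →
      A ∩ thickClosure (B ∪ C') = thickClosure ((A ∩ B) ∪ (A ∩ C')))
    {P A B : Set C} (hP : IsThick P) (hA : IsThick A) (hB : IsThick B) (hAB : A ∩ B ⊆ P) :
    thickClosure (P ∪ A) ∩ thickClosure (P ∪ B) ⊆ P := by
  rw [hdist _ P B (isThick_thickClosure_s7 _) hP hB]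
  refine thickClosure_subset hP (Set.union_subset Set.inter_subset_right ?_)
  rw [Set.inter_comm, hdist B P A hB hP hA]
  refine thickClosure_subset hP (Set.union_subset Set.inter_subset_right ?_)
  rwa [Set.inter_comm]

/-- If `K` is essentially small and its lattice of thick subcategories is distributive,
then the lattice of thick subcategories has enough points: for thick subcategories
`M`, `N` with `N ⊄ M` there is a meet-prime thick subcategory `P` with `M ⊆ P`
and `N ⊄ P`. -/
theorem enough_points_of_distrib [EssentiallySmall.{w} C]
    (hdist : ∀ A B C' : Set C, IsThick A → IsThick B → IsThick C' →
      A ∩ thickClosure (B ∪ C') = thickClosure ((A ∩ B) ∪ (A ∩ C')))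
    (M N : Set C) (hM : IsThick M) (hN : IsThick N) (hNM : ¬ N ⊆ M) :
    ∃ P : Set C, IsThick P ∧ P ≠ Set.univ ∧
      (∀ A B : Set C, IsThick A → IsThick B → A ∩ B ⊆ P → A ⊆ P ∨ B ⊆ P) ∧
      M ⊆ P ∧ ¬ N ⊆ P := by
  obtain ⟨x, hxN, hxM⟩ := Set.not_subset.mp hNM
  obtain ⟨P, hMP, hmax⟩ := zorn_subset_nonempty {S : Set C | IsThick S ∧ x ∉ S}
    (fun c hc hchain hne => ⟨⋃₀ c,
      ⟨IsThick.sUnion hchain hne fun S hS => (hc hS).1,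
        fun ⟨S, hS, hxS⟩ => (hc hS).2 hxS⟩,
      fun S hS => Set.subset_sUnion_of_mem hS⟩) M ⟨hM, hxM⟩
  obtain ⟨hP, hxP⟩ := hmax.prop
  have key : ∀ A : Set C, ¬ A ⊆ P → x ∈ thickClosure (P ∪ A) := by
    intro A hAP
    by_contra hx
    have hle := hmax.le_of_ge ⟨isThick_thickClosure_s7 (P ∪ A), hx⟩
      (Set.subset_union_left.trans (subset_thickClosure _))
    exact hAP ((Set.subset_union_right.trans (subset_thickClosure _)).trans hle)
  refine ⟨P, hP, fun h => hxP (h ▸ Set.mem_univ x), fun A B hA hB hAB => ?_, hMP,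
    fun h => hxP (h hxN)⟩
  by_contra! hcon
  exact hxP (thickClosure_inter_subset hdist hP hA hB hAB ⟨key A hcon.1, key B hcon.2⟩)
end

section
/- Let L be a compactly generated (algebraic) distributive complete lattice, and let X be the set of meet-prime elements of L equipped with the topology whose open sets are the sets U_a = {p ∈ X | a ≰ p} for a ∈ L. Then the map a ↦ U_a is an order isomorphism from L onto the lattice of open subsets of X, with inverse given by sending an open set U to ⨅ {p ∈ X | p ∉ U}. -/
/-!
The family of sets `U_a` is closed under finite intersections (by meet-primality) and arbitrary
unions, so these sets are all the open sets (`exists_eq_of_isOpen`). The remaining content is that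
there are enough meet-prime elements: if `a ≰ b`, some meet-prime `p ≥ b` has `a ≰ p`
(`exists_meetPrime_separating`). To see this, choose a compact `k ≤ a` with `k ≰ b`; by Zorn's
lemma there is `p ≥ b` maximal among the elements not above `k`, compactness of `k` giving upper
bounds of chains. If `x, y ≰ p`, then maximality puts `k` below `p ⊔ x` and `p ⊔ y`, hence, by
distributivity, below `p ⊔ (x ⊓ y)`, so `x ⊓ y ≰ p`. Consequently every `a` is the infimum of the
meet-primes above it, and this recovers `a` from `U_a`.
-/

/-- The set of meet-prime elements of a complete lattice `L`. -/
abbrev MeetPrimes (L : Type*) [CompleteLattice L] :=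
  {p : L // p ≠ ⊤ ∧ ∀ a b : L, a ⊓ b ≤ p → a ≤ p ∨ b ≤ p}

/-- The topology on the meet-prime elements whose open sets are the sets
`U_a = {p | a ≰ p}` for `a ∈ L`. -/
abbrev meetPrimesTopology (L : Type*) [CompleteLattice L] : TopologicalSpace (MeetPrimes L) :=
  .generateFrom {U : Set (MeetPrimes L) | ∃ a : L, U = {p : MeetPrimes L | ¬ a ≤ (p : L)}}

/-- Enough meet-primes: the analogue of the prime ideal theorem, where Zorn's lemma is applied to
the elements that avoid a compact element below `a`. -/
theorem exists_meetPrime_separating {L : Type*} [CompleteLattice L] [IsCompactlyGenerated L]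
    (hdist : ∀ a b c : L, a ⊓ (b ⊔ c) = (a ⊓ b) ⊔ (a ⊓ c)) {a b : L} (hab : ¬ a ≤ b) :
    ∃ p : MeetPrimes L, b ≤ (p : L) ∧ ¬ a ≤ (p : L) := by
  obtain ⟨k, hk, hka, hkb⟩ : ∃ k : L, IsCompactElement k ∧ k ≤ a ∧ ¬ k ≤ b := by
    by_contra! h
    exact hab (le_iff_compact_le_imp.2 h)
  obtain ⟨p, hbp, hp⟩ := zorn_le_nonempty₀ {x : L | ¬ k ≤ x} (fun c hc hchain y hy =>
    ⟨sSup c, fun hle => by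
      obtain ⟨x, hx, hkx⟩ := (CompleteLattice.isCompactElement_iff_le_of_directed_sSup_le L k).1 hk c ⟨y, hy⟩
        hchain.directedOn hle
      exact hc hx hkx, fun z hz => le_sSup hz⟩) b hkb
  have hkp : ¬ k ≤ p := hp.prop
  have hmax : ∀ x : L, ¬ x ≤ p → k ≤ p ⊔ x := fun x hx => by
    by_contra hkx
    exact hx (le_sup_right.trans (hp.le_of_ge (show p ⊔ x ∈ {x : L | ¬ k ≤ x} from hkx)
      le_sup_left))
  refine ⟨⟨p, fun htop => hkp (htop ▸ le_top), fun x y hxy => ?_⟩, hbp,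
    fun hap => hkp (hka.trans hap)⟩
  by_contra! h
  apply hkp
  let _ : DistribLattice L := DistribLattice.ofInfSupLe fun a b c => (hdist a b c).le
  calc k ≤ (p ⊔ x) ⊓ (p ⊔ y) := le_inf (hmax x h.1) (hmax y h.2)
    _ = p ⊔ x ⊓ y := (sup_inf_left p x y).symm
    _ ≤ p := sup_le le_rfl hxy

theorem sInf_meetPrimes_ge {L : Type*} [CompleteLattice L] [IsCompactlyGenerated L]
    (hdist : ∀ a b c : L, a ⊓ (b ⊔ c) = (a ⊓ b) ⊔ (a ⊓ c)) (a : L) :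
    sInf ((↑) '' {p : MeetPrimes L | a ≤ (p : L)} : Set L) = a := by
  refine le_antisymm ?_ (le_sInf ?_)
  · by_contra h
    obtain ⟨p, hap, hp⟩ := exists_meetPrime_separating hdist h
    exact hp (sInf_le ⟨p, hap, rfl⟩)
  · rintro _ ⟨p, hp, rfl⟩
    exact hp

/-- The sets `U_a` generating the topology already form a topology. -/
theorem exists_eq_of_isOpen {L : Type*} [CompleteLattice L] {U : Set (MeetPrimes L)}
    (hU : @IsOpen (MeetPrimes L) (meetPrimesTopology L) U) :
    ∃ a : L, U = {p : MeetPrimes L | ¬ a ≤ (p : L)} := by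
  change TopologicalSpace.GenerateOpen _ U at hU
  induction hU with
  | basic s hs => exact hs
  | univ =>
    refine ⟨⊤, Set.ext fun p => ?_⟩
    simpa using p.2.1
  | inter s t _ _ ihs iht =>
    obtain ⟨a, rfl⟩ := ihs
    obtain ⟨b, rfl⟩ := iht
    refine ⟨a ⊓ b, Set.ext fun p => ⟨fun h hab => ?_, fun h => ?_⟩⟩
    · exact (p.2.2 a b hab).elim h.1 h.2
    · exact ⟨fun ha => h (inf_le_left.trans ha), fun hb => h (inf_le_right.trans hb)⟩
  | sUnion S _ ih =>
    choose! f hf using ih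
    refine ⟨⨆ s ∈ S, f s, Set.ext fun p => ?_⟩
    have hmem : ∀ s ∈ S, (p ∈ s ↔ ¬ f s ≤ (p : L)) := fun s hs =>
      Set.ext_iff.1 (hf s hs) p
    simp only [Set.mem_sUnion, Set.mem_ofPred_eq, iSup_le_iff, not_forall]
    exact ⟨fun ⟨s, hs, hps⟩ => ⟨s, hs, (hmem s hs).1 hps⟩,
      fun ⟨s, hs, hps⟩ => ⟨s, hs, (hmem s hs).2 hps⟩⟩


/-- For a compactly generated (algebraic) distributive complete lattice `L`, the map
`a ↦ U_a = {p meet-prime | a ≰ p}` is an order isomorphism of `L` onto the lattice of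
open subsets of the space of meet-prime elements, with inverse sending an open set `U`
to `⨅ {p | p ∉ U}`. -/
theorem orderIso_opens_of_isCompactlyGenerated
    (L : Type*) [CompleteLattice L] [IsCompactlyGenerated L]
    (hdist : ∀ a b c : L, a ⊓ (b ⊔ c) = (a ⊓ b) ⊔ (a ⊓ c)) :
    (∀ a : L, @IsOpen (MeetPrimes L) (meetPrimesTopology L) {p : MeetPrimes L | ¬ a ≤ (p : L)}) ∧
    (∀ a b : L, a ≤ b ↔
      {p : MeetPrimes L | ¬ a ≤ (p : L)} ⊆ {p : MeetPrimes L | ¬ b ≤ (p : L)}) ∧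
    (∀ U : Set (MeetPrimes L), @IsOpen (MeetPrimes L) (meetPrimesTopology L) U →
      U = {p : MeetPrimes L | ¬ sInf ((↑) '' Uᶜ : Set L) ≤ (p : L)}) ∧
    (∀ a : L, sInf ((↑) '' {p : MeetPrimes L | a ≤ (p : L)} : Set L) = a) := by
  refine ⟨fun a => TopologicalSpace.GenerateOpen.basic _ ⟨a, rfl⟩, fun a b => ⟨?_, fun h => ?_⟩,
    fun U hU => ?_, sInf_meetPrimes_ge hdist⟩
  · exact fun hab p hp hb => hp (hab.trans hb)
  · by_contra hab
    obtain ⟨p, hbp, hap⟩ := exists_meetPrime_separating hdist hab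
    exact h hap hbp
  · obtain ⟨a, rfl⟩ := exists_eq_of_isOpen hU
    have hcompl : {p : MeetPrimes L | ¬ a ≤ (p : L)}ᶜ = {p : MeetPrimes L | a ≤ (p : L)} :=
      Set.ext fun p => not_not
    rw [hcompl, sInf_meetPrimes_ge hdist a]
end
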